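/- (Lemma 2, part ii) Under the standing assumptions on the global optimization problem, if the problem is solvable — i.e., there exists x̃ ∈ 𝒳 such that F_i(x) ≥ F_i(x̃) for every x ∈ 𝒳 and every i — then the greatest subsolution x*(A,b), defined by x*_j = ⨅_{i} s(b_i, A i j) (s(b,a) = +∞ if a = -∞, else b - a in EReal), is finite: for every j, x*_j ≠ -∞ and x*_j ≠ +∞ (x*_j is a real number). -/

import Mathlib

open scoped BigOperators

noncomputable section

/-- Max-plus product: `(A ⊗ x)_i = ⨆_j (A i j + x_j)` in `EReal`. -/
def maxPlus {m n : ℕ} (A : Matrix (Fin m) (Fin n) EReal) (x : Fin n → EReal)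
    (i : Fin m) : EReal :=
  ⨆ j, A i j + x j

/-- Auxiliary subtraction: `s(b,a) = +∞` if `a = -∞`, else `b - a`. -/
def sSub (b a : EReal) : EReal := if a = ⊥ then ⊤ else b - a

/-- Greatest subsolution `x*(A,b)_j = ⨅_i s(b_i, A i j)`. -/
def xstar {m n : ℕ} (A : Matrix (Fin m) (Fin n) EReal) (b : Fin m → EReal)
    (j : Fin n) : EReal :=
  ⨅ i, sSub (b i) (A i j)

/-- Objective function `F(x)_i = ⨆_j (A i j + x_j)` for real vectors `x`. -/
def objF {m n : ℕ} (A : Matrix (Fin m) (Fin n) EReal) (x : Fin n → ℝ)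
    (i : Fin m) : EReal :=
  ⨆ j, A i j + (x j : EReal)

/-- `J = {j | k_j > 0}` as a finite set. -/
def Jset {n : ℕ} (k : Fin n → ℝ) : Finset (Fin n) :=
  Finset.univ.filter (fun j => 0 < k j)

/-- Greatest lower bound `b_i = ((∑_{j ∈ J} k_j * A i j) + c) / (∑_{j ∈ J} k_j)`. -/
def glb {m n : ℕ} (A : Matrix (Fin m) (Fin n) EReal) (k : Fin n → ℝ) (c : ℝ)
    (i : Fin m) : EReal :=
  ((∑ j ∈ Jset k, (k j : EReal) * A i j) + (c : EReal)) /
    ((∑ j ∈ Jset k, k j : ℝ) : EReal)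

/-- `xt` is a globally optimal solution of the problem `(A, k, c)`. -/
def IsOptimal {m n : ℕ} (A : Matrix (Fin m) (Fin n) EReal) (k : Fin n → ℝ)
    (c : ℝ) (xt : Fin n → ℝ) : Prop :=
  (∑ j, k j * xt j = c) ∧
    ∀ x : Fin n → ℝ, (∑ j, k j * x j = c) → ∀ i, objF A xt i ≤ objF A x i

/-!
If a weighted column `j` (one with `k j ≠ 0`) had an entry `A i j = -∞`, then `x j` would not enter
`F(x)_i`, so it could be used to restore the constraint after all other coordinates have been sent
to `-∞`; hence `F_i` would be unbounded below on the feasible set. A lower bound on the objective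
therefore makes every entry of `A` in a column of `J` finite, and then so is every `b_i`. Each
`x*_j` is now a minimum of finitely many terms, each real or `+∞`, and a column with some finite
entry contributes a real one.
-/

section FiniteIndex

variable {ι : Type*}

lemma exists_sum_mul_update_eq [Fintype ι] [DecidableEq ι] {K : Type*} [DivisionRing K]
    {k : ι → K} {i : ι} (hi : k i ≠ 0) (y : ι → K) (c : K) :
    ∃ t, ∑ j, k j * Function.update y i t j = c := by
  refine ⟨(k i)⁻¹ * (c - ∑ j ∈ Finset.univ.erase i, k j * y j), ?_⟩
  have sum_off_i : ∀ t, ∑ j ∈ Finset.univ.erase i, k j * Function.update y i t j =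
      ∑ j ∈ Finset.univ.erase i, k j * y j := fun t =>
    Finset.sum_congr rfl fun j hj => by rw [Function.update_of_ne (Finset.ne_of_mem_erase hj)]
  rw [← Finset.add_sum_erase _ _ (Finset.mem_univ i), sum_off_i, Function.update_self,
    mul_inv_cancel_left₀ hi, sub_add_cancel]

lemma exists_forall_add_coe_le [Finite ι] {a : ι → EReal} (ha : ∀ j, a j ≠ ⊤) (r : ℝ) :
    ∃ d : ℝ, ∀ j, a j + d ≤ r := by
  obtain ⟨M, hM⟩ := Finite.exists_le fun j => (a j).toReal
  refine ⟨r - M, fun j => ?_⟩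
  calc a j + (r - M : ℝ) ≤ (M : EReal) + (r - M : ℝ) := by
        gcongr
        exact (EReal.le_coe_toReal (ha j)).trans (EReal.coe_le_coe (hM j))
    _ = r := by rw [← EReal.coe_add, add_sub_cancel]

lemma ne_bot_of_forall_le_iSup_add [Fintype ι] {a : ι → EReal} (ha : ∀ j, a j ≠ ⊤)
    {k : ι → ℝ} {c r : ℝ}
    (hr : ∀ x : ι → ℝ, ∑ j, k j * x j = c → (r : EReal) ≤ ⨆ j, a j + (x j : EReal))
    {i : ι} (hi : k i ≠ 0) : a i ≠ ⊥ := by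
  classical
  intro hbot
  obtain ⟨d, hd⟩ := exists_forall_add_coe_le ha (r - 1)
  obtain ⟨t, ht⟩ := exists_sum_mul_update_eq hi (fun _ => d) c
  have sup_le : ⨆ j, a j + (Function.update (fun _ => d) i t j : EReal) ≤ (r - 1 : ℝ) := by
    refine iSup_le fun j => ?_
    rcases eq_or_ne j i with rfl | hj
    · simp only [hbot, EReal.bot_add, bot_le]
    · simpa only [Function.update_of_ne hj] using hd j
  have : r ≤ r - 1 := EReal.coe_le_coe_iff.mp ((hr _ ht).trans sup_le)
  linarith

lemma ereal_coe_sum (s : Finset ι) (f : ι → ℝ) :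
    ((∑ j ∈ s, f j : ℝ) : EReal) = ∑ j ∈ s, (f j : EReal) :=
  map_sum (⟨⟨Real.toEReal, EReal.coe_zero⟩, EReal.coe_add⟩ : ℝ →+ EReal) f s

end FiniteIndex

lemma sSub_ne_bot {b a : EReal} (hb : b ≠ ⊥) (ha : a ≠ ⊤) : sSub b a ≠ ⊥ := by
  unfold sSub
  split_ifs
  · exact top_ne_bot
  · exact EReal.add_ne_bot_iff.mpr ⟨hb, mt EReal.neg_eq_bot_iff.mp ha⟩

lemma sSub_ne_top {b a : EReal} (hb : b ≠ ⊤) (ha : a ≠ ⊥) : sSub b a ≠ ⊤ := by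
  rw [sSub, if_neg ha]
  exact EReal.add_ne_top hb (mt EReal.neg_eq_top_iff.mp ha)

section MaxPlusMatrix

variable {m n : ℕ} {A : Matrix (Fin m) (Fin n) EReal}

lemma objF_ne_bot {i : Fin m} {j : Fin n} (hij : A i j ≠ ⊥) (x : Fin n → ℝ) : objF A x i ≠ ⊥ :=
  ne_bot_of_le_ne_bot (EReal.add_ne_bot_iff.mpr ⟨hij, EReal.coe_ne_bot _⟩)
    (le_iSup (fun j => A i j + (x j : EReal)) j)

lemma IsOptimal.exists_forall_le_objF {k : Fin n → ℝ} {c : ℝ} {xt : Fin n → ℝ}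
    (hxt : IsOptimal A k c xt) {i : Fin m} (hi : ∃ j, A i j ≠ ⊥) :
    ∃ r : ℝ, ∀ x : Fin n → ℝ, ∑ j, k j * x j = c → (r : EReal) ≤ objF A x i := by
  obtain ⟨j, hij⟩ := hi
  obtain ⟨r, -, hr⟩ := EReal.lt_iff_exists_real_btwn.mp (objF_ne_bot hij xt).bot_lt
  exact ⟨r, fun x hx => hr.le.trans (hxt.2 x hx i)⟩

lemma glb_eq_coe {k : Fin n → ℝ} (c : ℝ) {i : Fin m} (htop : ∀ j ∈ Jset k, A i j ≠ ⊤)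
    (hbot : ∀ j ∈ Jset k, A i j ≠ ⊥) :
    glb A k c i =
      (((∑ j ∈ Jset k, k j * (A i j).toReal + c) / ∑ j ∈ Jset k, k j : ℝ) : EReal) := by
  have sum_eq : ∑ j ∈ Jset k, (k j : EReal) * A i j =
      (∑ j ∈ Jset k, k j * (A i j).toReal : ℝ) := by
    rw [ereal_coe_sum]
    exact Finset.sum_congr rfl fun j hj => by
      rw [EReal.coe_mul, EReal.coe_toReal (htop j hj) (hbot j hj)]
  rw [glb, sum_eq, EReal.coe_div, EReal.coe_add]

lemma xstar_ne_bot {b : Fin m → EReal} {j : Fin n} (hb : ∀ i, b i ≠ ⊥) (hA : ∀ i, A i j ≠ ⊤) :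
    xstar A b j ≠ ⊥ := by
  rw [xstar, ← Finset.inf_univ_eq_iInf, ← bot_lt_iff_ne_bot, Finset.lt_inf_iff bot_lt_top]
  exact fun i _ => (sSub_ne_bot (hb i) (hA i)).bot_lt

lemma xstar_ne_top {b : Fin m → EReal} {i : Fin m} {j : Fin n} (hb : b i ≠ ⊤) (hij : A i j ≠ ⊥) :
    xstar A b j ≠ ⊤ :=
  ne_top_of_le_ne_top (sSub_ne_top hb hij) (iInf_le _ i)

end MaxPlusMatrix

theorem stmt_7_general {m n : ℕ} (hm : 1 ≤ m)
    (A : Matrix (Fin m) (Fin n) EReal) (hA : ∀ i j, A i j ≠ ⊤)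
    (k : Fin n → ℝ) (hpos : ∃ j, 0 < k j) (c : ℝ)
    (hcol : ∀ j, (∀ i, A i j = ⊥) → 0 < k j)
    (hbdd : ∀ i, ∃ r : ℝ, ∀ x : Fin n → ℝ, ∑ j, k j * x j = c → (r : EReal) ≤ objF A x i) :
    ∀ j, xstar A (glb A k c) j ≠ ⊥ ∧ xstar A (glb A k c) j ≠ ⊤ := by
  have weighted_ne_bot (i : Fin m) (j : Fin n) (hj : 0 < k j) : A i j ≠ ⊥ := by
    obtain ⟨r, hr⟩ := hbdd i
    exact ne_bot_of_forall_le_iSup_add (hA i) hr hj.ne'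
  have glb_finite (i : Fin m) : glb A k c i ≠ ⊥ ∧ glb A k c i ≠ ⊤ := by
    rw [glb_eq_coe c (fun j _ => hA i j)
      fun j hj => weighted_ne_bot i j (Finset.mem_filter.mp hj).2]
    exact ⟨EReal.coe_ne_bot _, EReal.coe_ne_top _⟩
  have col_finite (j : Fin n) : ∃ i, A i j ≠ ⊥ := by
    by_contra! hj
    exact weighted_ne_bot ⟨0, hm⟩ j (hcol j hj) (hj _)
  intro j
  obtain ⟨i, hij⟩ := col_finite j
  exact ⟨xstar_ne_bot (fun i => (glb_finite i).1) (hA · j), xstar_ne_top (glb_finite i).2 hij⟩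

theorem stmt_7 {m n : ℕ} (hm : 1 ≤ m) (hn : 1 ≤ n)
    (A : Matrix (Fin m) (Fin n) EReal) (hA : ∀ i j, A i j ≠ ⊤)
    (k : Fin n → ℝ) (hk : ∀ j, 0 ≤ k j) (hk0 : ∃ j, k j ≠ 0) (c : ℝ)
    (hrow : ∀ i, ∃ j, A i j ≠ ⊥)
    (hcol : ∀ j, (∀ i, A i j = ⊥) → 0 < k j)
    (hsolv : ∃ xt : Fin n → ℝ, IsOptimal A k c xt) :
    ∀ j, xstar A (glb A k c) j ≠ ⊥ ∧ xstar A (glb A k c) j ≠ ⊤ := by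
  obtain ⟨xt, hxt⟩ := hsolv
  exact stmt_7_general hm A hA k (hk0.imp fun j hj => (hk j).lt_of_ne' hj) c hcol
    fun i => hxt.exists_forall_le_objF (hrow i)
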